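/- arXiv:2303.10467 — 2 statements merged into one kernel-verified Lean document; each statement's English description precedes it below -/
import Mathlib

section
/- Suppose λ_0, …, λ_{ns−1} are pairwise distinct and satisfy the local constraints. Fix a ∈ {0,…,n/s−1}, b ∈ {0,…,s−1}, and a helper set H ⊆ {0,…,n−1} \ {as+b} with |H| = d. If two codewords C = (C_0,…,C_{n−1}) and C′ = (C′_0,…,C′_{n−1}) of the array code satisfy C_j(i) = C′_j(i) for every j ∈ H and every i ∈ {0,…,ℓ−1} whose a-th base-s digit i_a equals b, then C_{as+b} = C′_{as+b}. In other words, node as+b can be repaired from any d helper nodes by accessing only the ℓ/s symbols with i_a = b from each helper, achieving the optimal repair bandwidth dℓ/(d−k+1) with the optimal-access property. -/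
open Matrix

/-- The `u`-th digit of `i` in base `s`. -/
def digit (s i u : ℕ) : ℕ := i / s ^ u % s

open scoped Classical in
/-- The `z`-th entry of the `(i,j)` block (a length-`t` column vector, `0 ≤ z < t`) of the
block matrix `A_{a,b}^{(t)}`; the group size is `g` (`g = s` for the first construction and
`g = s + 1` for the second), so the relevant `λ`-index is `a·s·g + b·s + j_a`. -/
noncomputable def Aent {F : Type*} [Field F] (lam : ℕ → F) (s g a b i j z : ℕ) : F :=
  if i = j then lam (a * s * g + b * s + digit s j a) ^ z
  else if digit s i a = b ∧ digit s j a ≠ b ∧ (∀ u, u ≠ a → digit s i u = digit s j u) then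
    -(lam (a * s * g + b * s + digit s j a) ^ z)
  else 0

/-- `A_{a,b}^{(t)}` as an `ℓt × ℓ` matrix; row `ρ` encodes block row `ρ / t` and
inner row `ρ % t`. -/
noncomputable def Amat {F : Type*} [Field F] (lam : ℕ → F) (s g ℓ a b t : ℕ) :
    Matrix (Fin (ℓ * t)) (Fin ℓ) F :=
  Matrix.of fun ρ j => Aent lam s g a b ((ρ : ℕ) / t) (j : ℕ) ((ρ : ℕ) % t)

/-- The `m`-th smallest element of the finite set `B ⊆ ℕ` (junk value `0` if `m ≥ |B|`). -/
def enum (B : Finset ℕ) (m : ℕ) : ℕ := (B.sort (· ≤ ·)).getD m 0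

/-- `A_{a,B}^{(t)} = [A_{a,b₁}^{(t)} | ⋯ | A_{a,b_v}^{(t)}]` as an `ℓt × ℓ|B|` matrix:
row `ρ` encodes block row `ρ / t` and inner row `ρ % t`; column `κ` selects the
`κ / ℓ`-th member of `B` and inner column `κ % ℓ`. -/
noncomputable def AmatB {F : Type*} [Field F] (lam : ℕ → F) (s g ℓ a t : ℕ) (B : Finset ℕ) :
    Matrix (Fin (ℓ * t)) (Fin (ℓ * B.card)) F :=
  Matrix.of fun ρ κ =>
    Aent lam s g a (enum B ((κ : ℕ) / ℓ)) ((ρ : ℕ) / t) ((κ : ℕ) % ℓ) ((ρ : ℕ) % t)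

/-- The local (in-group) constraints: every square matrix `A_{a,B}` (for a group index
`a < groups` and a nonempty `B ⊆ {0, …, g-1}`) is invertible. -/
def LocalConstraints {F : Type*} [Field F] (lam : ℕ → F) (s g ℓ groups : ℕ) : Prop :=
  ∀ a < groups, ∀ B ⊆ Finset.range g, B.Nonempty → (AmatB lam s g ℓ a B.card B).det ≠ 0

/-- Membership in the array code: `(C_0, …, C_{n−1})` satisfies the parity check equations
`Σ_{a,b} A_{a,b}^{(r)} · C_{a·g+b} = 0` (node `m = a·g + b`). -/
def InCode {F : Type*} [Field F] (lam : ℕ → F) (s g ℓ r n : ℕ) (C : ℕ → ℕ → F) : Prop :=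
  ∀ ρ < ℓ * r, ∑ m ∈ Finset.range n, ∑ j ∈ Finset.range ℓ,
    Aent lam s g (m / g) (m % g) (ρ / r) j (ρ % r) * C m j = 0


theorem single_group {F R : Type*} [Field F] [Ring R] [Algebra F R] [IsDedekindFiniteMonoid R]
    (v : ℕ) (T L : ℕ → R)
    (hV : IsUnit (Matrix.of (fun (z q : Fin v) => T q * L q ^ (z : ℕ)) : Matrix (Fin v) (Fin v) R)) :
    ∃ p : ℕ → R, p v = 1 ∧ (∀ q < v, ∑ i ∈ Finset.range (v + 1), p i * (T q * L q ^ i) = 0) ∧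
      (∀ c : R, (∀ q < v, Commute c (T q) ∧ Commute c (L q)) → ∀ i, Commute c (p i)) ∧
      (∀ μ : F, (∀ q < v, ∃ N, (L q - algebraMap F R μ) * N = 1) →
        ∃ Q, Q * ∑ i ∈ Finset.range (v + 1), p i * algebraMap F R μ ^ i = 1) := by
  obtain ⟨u, hu⟩ := hV
  set V := (Matrix.of (fun (z q : Fin v) => T q * L q ^ (z : ℕ)) : Matrix (Fin v) (Fin v) R) with hVdef
  set W : Matrix (Fin v) (Fin v) R := ((u⁻¹ : (Matrix (Fin v) (Fin v) R)ˣ) : Matrix (Fin v) (Fin v) R) with hWdef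
  have hVW : V * W = 1 := by rw [← hu]; exact u.mul_inv
  have hWV : W * V = 1 := by rw [← hu]; exact u.inv_mul
  set rw' : Fin v → R := fun q => T q * L q ^ v with hrw
  set p : ℕ → R := fun i => if h : i < v then - (rw' ᵥ* W) ⟨i, h⟩ else 1 with hp
  have hpv : p v = 1 := by simp [hp]
  have hpi : ∀ i : Fin v, p i = - (rw' ᵥ* W) i := by intro i; simp [hp]
  have h1 : ∀ q < v, ∑ i ∈ Finset.range (v + 1), p i * (T q * L q ^ i) = 0 := by
    intro q hq
    rw [Finset.sum_range_succ, hpv, Finset.sum_range]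
    have : ∑ i : Fin v, p i * (T q * L q ^ (i : ℕ)) = - ((rw' ᵥ* W) ᵥ* V) ⟨q, hq⟩ := by
      simp only [hpi]
      simp [Matrix.vecMul, dotProduct, hVdef]
    rw [this, Matrix.vecMul_vecMul, hWV, Matrix.vecMul_one]
    simp [hrw]
  refine ⟨p, hpv, h1, ?_, ?_⟩
  · intro c hc i
    have hcV : Commute (Matrix.diagonal (fun _ : Fin v => c)) V := by
      ext z q
      simp only [Matrix.diagonal_mul, Matrix.mul_diagonal]
      exact ((hc q q.2).1.mul_right ((hc q q.2).2.pow_right _)).eq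
    have hcW : Commute (Matrix.diagonal (fun _ : Fin v => c)) W := by
      rw [← hu] at hcV
      exact hcV.units_inv_right
    have hcW' : ∀ z q, Commute c (W z q) := by
      intro z q
      have := congrFun (congrFun hcW.eq z) q
      simp only [Matrix.diagonal_mul, Matrix.mul_diagonal] at this
      exact this
    by_cases h : i < v
    · have : p i = _ := hpi ⟨i, h⟩
      rw [this]
      refine Commute.neg_right ?_
      simp only [Matrix.vecMul, dotProduct]
      refine Commute.sum_right _ _ _ fun q _ => ?_
      exact ((hc q q.2).1.mul_right ((hc q q.2).2.pow_right _)).mul_right (hcW' _ _)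
    · simp [hp, h]
  · intro μ hμ
    rcases Nat.eq_zero_or_pos v with rfl | hv
    · exact ⟨1, by simp [hp]⟩
    have hμ' : ∀ q : Fin v, ∃ N, (L q - algebraMap F R μ) * N = 1 := fun q => hμ q q.2
    choose N hN using hμ'
    set M := algebraMap F R μ with hM
    set Pμ := ∑ i ∈ Finset.range (v + 1), p i * M ^ i with hPμ
    have hcM : ∀ x : R, Commute x M := fun x => (Algebra.commutes μ x).symm
    set G : Fin v → R := fun k =>
      ∑ i ∈ Finset.range (v + 1), if (k : ℕ) < i then p i * M ^ (i - 1 - k) else 0 with hG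
    have hGV : G ᵥ* V = fun q : Fin v => Pμ * -(T q * N q) := by
      funext q
      have e1 : ∀ i, L q ^ i - M ^ i = (∑ k ∈ Finset.range i, L q ^ k * M ^ (i - 1 - k)) * (L q - M) := by
        intro i; exact ((hcM (L q)).geom_sum₂_mul i).symm
      have e2 : (G ᵥ* V) q = ∑ i ∈ Finset.range (v + 1),
          p i * T q * ∑ k ∈ Finset.range i, L q ^ k * M ^ (i - 1 - k) := by
        simp only [Matrix.vecMul, dotProduct, hG, hVdef, Matrix.of_apply]
        simp only [Finset.sum_mul]
        rw [Finset.sum_comm]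
        refine Finset.sum_congr rfl fun i hi => ?_
        have hi' : i ≤ v := by simpa [Nat.lt_succ_iff] using hi
        rw [← Finset.sum_range (fun k => (if k < i then p i * M ^ (i - 1 - k) else 0) *
          (T q * L q ^ k)), Finset.mul_sum]
        symm
        refine (Finset.sum_congr rfl ?_).trans (Finset.sum_subset (Finset.range_mono hi') ?_)
        · intro k hk
          rw [if_pos (by simpa using hk)]
          have c1 : Commute (T q * L q ^ k) (M ^ (i - 1 - k)) := (hcM _).pow_right _
          rw [mul_assoc (p i) (M ^ _), ← c1.eq]
          simp only [mul_assoc]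
        · intro k _ hk
          rw [if_neg (by simpa using hk), zero_mul]
      have e3 : (G ᵥ* V) q * (L q - M) = - (Pμ * T q) := by
        rw [e2, Finset.sum_mul]
        have : ∀ i ∈ Finset.range (v + 1), p i * T q * (∑ k ∈ Finset.range i, L q ^ k * M ^ (i - 1 - k)) * (L q - M)
          = p i * (T q * L q ^ i) - p i * M ^ i * T q := by
          intro i _
          rw [mul_assoc, ← e1, mul_sub, mul_assoc, mul_assoc, mul_assoc, ((hcM (T q)).pow_right i).eq]
        rw [Finset.sum_congr rfl this, Finset.sum_sub_distrib, h1 q q.2, ← Finset.sum_mul, zero_sub]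
      calc (G ᵥ* V) q = (G ᵥ* V) q * (L q - M) * N q := by rw [mul_assoc, hN, mul_one]
        _ = _ := by rw [e3]; simp [mul_assoc]
    have hG2 : G = fun k => Pμ * (((fun q : Fin v => -(T q * N q)) ᵥ* W) k) := by
      have : G = (G ᵥ* V) ᵥ* W := by rw [Matrix.vecMul_vecMul, hVW, Matrix.vecMul_one]
      rw [this, hGV]
      funext k
      simp [Matrix.vecMul, dotProduct, Finset.mul_sum, mul_assoc]
    have hG3 : G ⟨v - 1, by omega⟩ = 1 := by
      simp only [hG]
      rw [Finset.sum_eq_single v]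
      · rw [if_pos (by omega), hpv]; simp
      · intro i hi hne
        have hi' : i ≤ v := by simpa [Nat.lt_succ_iff] using hi
        rw [if_neg (by omega)]
      · simp
    rw [hG2] at hG3
    exact ⟨_, mul_eq_one_symm hG3⟩

theorem multi_group {F R γ : Type*} [Field F] [Ring R] [Algebra F R] [IsDedekindFiniteMonoid R]
    [DecidableEq γ] (v : γ → ℕ) (T L : γ → ℕ → R) (S : γ → Finset F) (G : Finset γ)
    (hV : ∀ g ∈ G, IsUnit (Matrix.of (fun (z q : Fin (v g)) => T g q * L g q ^ (z : ℕ)) :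
      Matrix (Fin (v g)) (Fin (v g)) R))
    (hTT : ∀ g ∈ G, ∀ h ∈ G, g ≠ h → ∀ q q', Commute (T g q) (T h q'))
    (hTL : ∀ g ∈ G, ∀ h ∈ G, g ≠ h → ∀ q q', Commute (T g q) (L h q'))
    (hLL : ∀ g ∈ G, ∀ h ∈ G, g ≠ h → ∀ q q', Commute (L g q) (L h q'))
    (hN : ∀ g ∈ G, ∀ q, ∀ μ, μ ∉ S g → ∃ N, (L g q - algebraMap F R μ) * N = 1)
    (hS : ∀ g ∈ G, ∀ q, Polynomial.aeval (L g q) (∏ c ∈ S g, (Polynomial.X - Polynomial.C c)) = 0)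
    (hdisj : ∀ g ∈ G, ∀ h ∈ G, g ≠ h → ∀ x ∈ S g, x ∉ S h)
    (Y : γ → ℕ → R)
    (hY : ∀ z < ∑ g ∈ G, v g, ∑ g ∈ G, ∑ q ∈ Finset.range (v g), T g q * L g q ^ z * Y g q = 0) :
    ∀ g ∈ G, ∀ q < v g, Y g q = 0 := by
  classical
  induction G using Finset.induction_on generalizing Y with
  | empty => simp
  | insert g G hg ih =>
    obtain ⟨p, hpv, hp1, hpc, hpQ⟩ := single_group (F := F) (v g) (T g) (L g)
      (hV g (Finset.mem_insert_self _ _))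
    have hmg := Finset.mem_insert_self g G
    have hm : ∀ h ∈ G, h ∈ insert g G := fun h hh => Finset.mem_insert_of_mem hh
    have hne : ∀ h ∈ G, g ≠ h := fun h hh e => hg (e ▸ hh)
    have hcT : ∀ h ∈ G, ∀ q i, Commute (T h q) (p i) := fun h hh q i =>
      hpc _ (fun q' _ => ⟨(hTT g hmg h (hm h hh) (hne h hh) q' q).symm,
        hTL h (hm h hh) g hmg (hne h hh).symm q q'⟩) i
    have hcL : ∀ h ∈ G, ∀ q i, Commute (L h q) (p i) := fun h hh q i =>
      hpc _ (fun q' _ => ⟨(hTL g hmg h (hm h hh) (hne h hh) q' q).symm,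
        (hLL g hmg h (hm h hh) (hne h hh) q' q).symm⟩) i
    have key : ∀ h ∈ G, ∀ q < v h,
        (∑ i ∈ Finset.range (v g + 1), p i * L h q ^ i) * Y h q = 0 := by
      refine ih (fun h hh => hV h (hm h hh)) (fun h hh h' hh' => hTT h (hm h hh) h' (hm h' hh'))
        (fun h hh h' hh' => hTL h (hm h hh) h' (hm h' hh'))
        (fun h hh h' hh' => hLL h (hm h hh) h' (hm h' hh'))
        (fun h hh => hN h (hm h hh)) (fun h hh => hS h (hm h hh))
        (fun h hh h' hh' => hdisj h (hm h hh) h' (hm h' hh'))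
        (fun h q => (∑ i ∈ Finset.range (v g + 1), p i * L h q ^ i) * Y h q) ?_
      intro z hz
      have hsum : ∑ i ∈ Finset.range (v g + 1), p i *
          (∑ h ∈ insert g G, ∑ q ∈ Finset.range (v h), T h q * L h q ^ (z + i) * Y h q) = 0 := by
        refine Finset.sum_eq_zero fun i hi => ?_
        rw [hY, mul_zero]
        rw [Finset.sum_insert hg]
        have : i < v g + 1 := by simpa using hi
        omega
      simp only [Finset.sum_insert hg, mul_add, Finset.sum_add_distrib] at hsum
      have hg0 : ∑ i ∈ Finset.range (v g + 1), p i *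
          ∑ q ∈ Finset.range (v g), T g q * L g q ^ (z + i) * Y g q = 0 := by
        simp only [Finset.mul_sum]
        rw [Finset.sum_comm]
        refine Finset.sum_eq_zero fun q hq => ?_
        have : ∀ i ∈ Finset.range (v g + 1), p i * (T g q * L g q ^ (z + i) * Y g q)
          = p i * (T g q * L g q ^ i) * (L g q ^ z * Y g q) := by
          intro i _
          rw [add_comm z i, pow_add]; simp only [mul_assoc]
        rw [Finset.sum_congr rfl this, ← Finset.sum_mul, hp1 q (by simpa using hq), zero_mul]
      rw [hg0, zero_add] at hsum
      rw [← hsum]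
      simp only [Finset.mul_sum, Finset.sum_mul]
      rw [Finset.sum_comm' (t' := G) (s' := fun _ => Finset.range (v g + 1)) (by intros; tauto)]
      refine Finset.sum_congr rfl fun h hh => ?_
      rw [Finset.sum_comm]
      refine Finset.sum_congr rfl fun i _ => Finset.sum_congr rfl fun q _ => ?_
      have c1 : Commute (T h q * L h q ^ z) (p i) :=
        (hcT h hh q i).mul_left ((hcL h hh q i).pow_left z)
      rw [pow_add, ← mul_assoc, ← mul_assoc, ← mul_assoc, ← mul_assoc, c1.eq]
      simp only [mul_assoc]
    have hG0 : ∀ h ∈ G, ∀ q < v h, Y h q = 0 := by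
      intro h hh q hq
      have gen : ∀ A : Finset F, A ⊆ S h → ∀ y : R,
          (∑ i ∈ Finset.range (v g + 1), p i * L h q ^ i) * y = 0 →
          Polynomial.aeval (L h q) (∏ c ∈ A, (Polynomial.X - Polynomial.C c)) * y = 0 → y = 0 := by
        intro A
        induction A using Finset.induction_on with
        | empty => intro _ y _ h2; simpa using h2
        | insert c A hc ihA =>
          intro hA y h1 h2
          have hA' : A ⊆ S h := fun x hx => hA (Finset.mem_insert_of_mem hx)
          have hcS : c ∈ S h := hA (Finset.mem_insert_self _ _)
          have hy' : (L h q - algebraMap F R c) * y = 0 := by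
            apply ihA hA'
            · have : Commute (∑ i ∈ Finset.range (v g + 1), p i * L h q ^ i)
                  (L h q - algebraMap F R c) := by
                refine Commute.sub_right ?_ (Algebra.commutes c _).symm
                refine Commute.sum_left _ _ _ fun i _ => ?_
                exact (hcL h hh q i).symm.mul_left ((Commute.refl _).pow_left i)
              rw [← mul_assoc, this.eq, mul_assoc, h1, mul_zero]
            · rw [Finset.prod_insert hc, mul_comm, map_mul] at h2
              simpa [mul_assoc] using h2
          have hLy : L h q * y = algebraMap F R c * y := by
            rw [sub_mul, sub_eq_zero] at hy'; exact hy'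
          have hLi : ∀ i, L h q ^ i * y = algebraMap F R c ^ i * y := by
            intro i
            induction i with
            | zero => simp
            | succ i ih =>
              have hcm : Commute (algebraMap F R c) (L h q ^ i) := Algebra.commutes c _
              rw [pow_succ, mul_assoc, hLy, ← mul_assoc, ← hcm.eq, mul_assoc, ih, ← mul_assoc,
                ← pow_succ']
          obtain ⟨Q, hQ⟩ := hpQ c (fun q' _ => hN g hmg q' c
            (fun hcg => hdisj g hmg h (hm h hh) (hne h hh) c hcg hcS))
          have : (∑ i ∈ Finset.range (v g + 1), p i * algebraMap F R c ^ i) * y = 0 := by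
            rw [← h1, Finset.sum_mul, Finset.sum_mul]
            refine Finset.sum_congr rfl fun i _ => ?_
            rw [mul_assoc, mul_assoc, hLi]
          calc y = (Q * ∑ i ∈ Finset.range (v g + 1), p i * algebraMap F R c ^ i) * y := by
                rw [hQ, one_mul]
            _ = 0 := by rw [mul_assoc, this, mul_zero]
      exact gen (S h) subset_rfl _ (key h hh q hq) (by rw [hS h (hm h hh) q, zero_mul])
    have hgg : ∀ q < v g, Y g q = 0 := by
      obtain ⟨u, hu⟩ := hV g hmg
      have hz : (Matrix.of (fun (z q : Fin (v g)) => T g q * L g q ^ (z : ℕ)) :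
          Matrix (Fin (v g)) (Fin (v g)) R) *ᵥ (fun q : Fin (v g) => Y g q) = 0 := by
        funext z
        have := hY z (by rw [Finset.sum_insert hg]; have := z.2; omega)
        rw [Finset.sum_insert hg, Finset.sum_eq_zero (s := G), add_zero, Finset.sum_range] at this
        · simpa [Matrix.mulVec, dotProduct] using this
        · intro h hh
          refine Finset.sum_eq_zero fun q hq => ?_
          rw [hG0 h hh q (by simpa using hq), mul_zero]
      have h2 : (fun q : Fin (v g) => Y g q) = 0 := by
        rw [← hu] at hz
        have := congrArg (fun w => ((u⁻¹ : (Matrix (Fin (v g)) (Fin (v g)) R)ˣ) :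
          Matrix (Fin (v g)) (Fin (v g)) R) *ᵥ w) hz
        simpa [Matrix.mulVec_mulVec] using this
      intro q hq
      exact congrFun h2 ⟨q, hq⟩
    intro h hh
    rcases Finset.mem_insert.1 hh with rfl | hh
    · exact hgg
    · exact hG0 h hh

/-- operator acting on digit `a` through the `s × s` kernel `φ` -/
def Kmat {F : Type*} [Field F] {N s : ℕ} (a : Fin N) (φ : Fin s → Fin s → F) :
    Matrix (Fin N → Fin s) (Fin N → Fin s) F :=
  Matrix.of fun i j => if ∀ u, u ≠ a → i u = j u then φ (i a) (j a) else 0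

theorem Kmat_row {F : Type*} [Field F] {N s : ℕ} (a : Fin N) (φ : Fin s → Fin s → F)
    (i : Fin N → Fin s) (f : (Fin N → Fin s) → F) :
    ∑ j, Kmat a φ i j * f j = ∑ c, φ (i a) c * f (Function.update i a c) := by
  classical
  have hinj : Function.Injective (fun c => Function.update i a c) := Function.update_injective i a
  have : ∑ j ∈ Finset.univ.image (fun c => Function.update i a c), Kmat a φ i j * f j
      = ∑ c, φ (i a) c * f (Function.update i a c) := by
    rw [Finset.sum_image (fun x _ y _ h => hinj h)]
    refine Finset.sum_congr rfl fun c _ => ?_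
    simp only [Kmat, Matrix.of_apply, Function.update_self]
    rw [if_pos]
    intro u hu
    rw [Function.update_of_ne hu]
  rw [← this]
  symm
  refine Finset.sum_subset (Finset.subset_univ _) ?_
  intro j _ hj
  simp only [Kmat, Matrix.of_apply]
  rw [if_neg, zero_mul]
  intro h
  apply hj
  refine Finset.mem_image.2 ⟨j a, Finset.mem_univ _, ?_⟩
  funext u
  by_cases hu : u = a
  · subst hu; simp
  · simp [Function.update_of_ne hu, h u hu]

theorem Kmat_mul {F : Type*} [Field F] {N s : ℕ} (a c : Fin N) (hac : a ≠ c)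
    (φ ψ : Fin s → Fin s → F) (i k : Fin N → Fin s) :
    (Kmat a φ * Kmat c ψ) i k =
      if ∀ u, u ≠ a → u ≠ c → i u = k u then φ (i a) (k a) * ψ (i c) (k c) else 0 := by
  classical
  rw [Matrix.mul_apply, Kmat_row, Finset.sum_eq_single (k a)]
  · simp only [Kmat, Matrix.of_apply, Function.update_of_ne hac.symm]
    by_cases h : ∀ u, u ≠ a → u ≠ c → i u = k u
    · rw [if_pos h, if_pos]
      intro u hu
      by_cases hua : u = a
      · subst hua; simp
      · rw [Function.update_of_ne hua]; exact h u hua hu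
    · rw [if_neg h, if_neg, mul_zero]
      intro h2
      apply h
      intro u hua huc
      have := h2 u huc
      rwa [Function.update_of_ne hua] at this
  · intro x _ hx
    simp only [Kmat, Matrix.of_apply]
    rw [if_neg, mul_zero]
    intro h
    have := h a hac
    rw [Function.update_self] at this
    exact hx this
  · simp

theorem Kmat_commute {F : Type*} [Field F] {N s : ℕ} (a c : Fin N) (hac : a ≠ c)
    (φ ψ : Fin s → Fin s → F) : Commute (Kmat a φ) (Kmat c ψ) := by
  ext i k
  rw [Kmat_mul a c hac, Kmat_mul c a hac.symm]
  have : (∀ u, u ≠ a → u ≠ c → i u = k u) ↔ (∀ u, u ≠ c → u ≠ a → i u = k u) :=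
    ⟨fun h u h1 h2 => h u h2 h1, fun h u h1 h2 => h u h2 h1⟩
  simp only [this, mul_comm]

def Tphi (F : Type*) [Field F] (s b : ℕ) : Fin s → Fin s → F := fun x y =>
  if x = y then 1 else if (x : ℕ) = b ∧ (y : ℕ) ≠ b then -1 else 0

def Tm (F : Type*) [Field F] {N s : ℕ} (a : Fin N) (b : ℕ) :
    Matrix (Fin N → Fin s) (Fin N → Fin s) F := Kmat a (Tphi F s b)

def Lm {F : Type*} [Field F] {N s : ℕ} (lam : ℕ → F) (a : Fin N) (b : ℕ) :
    Matrix (Fin N → Fin s) (Fin N → Fin s) F :=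
  Matrix.diagonal fun j => lam (a * s * s + b * s + j a)

theorem Lm_eq {F : Type*} [Field F] {N s : ℕ} (lam : ℕ → F) (a : Fin N) (b : ℕ) :
    (Lm lam a b : Matrix (Fin N → Fin s) (Fin N → Fin s) F) =
      Kmat a (fun x y => if x = y then lam (a * s * s + b * s + y) else 0) := by
  ext i j
  by_cases h : i = j
  · subst h; simp [Lm, Kmat]
  · simp only [Lm, Kmat, Matrix.of_apply, Matrix.diagonal_apply_ne _ h]
    by_cases h2 : ∀ u, u ≠ a → i u = j u
    · rw [if_pos h2, if_neg]
      intro h3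
      apply h
      funext u
      by_cases hu : u = a
      · rw [hu]; exact h3
      · exact h2 u hu
    · rw [if_neg h2]

theorem TL_eq {F : Type*} [Field F] {N s : ℕ} (lam : ℕ → F) (a : Fin N) (b z : ℕ) :
    (Tm F a b * Lm lam a b ^ z : Matrix (Fin N → Fin s) (Fin N → Fin s) F) =
      Kmat a (fun x y => Tphi F s b x y * lam (a * s * s + b * s + y) ^ z) := by
  ext i j
  simp only [Lm, Matrix.diagonal_pow, Matrix.mul_diagonal, Tm, Kmat, Matrix.of_apply, Pi.pow_apply]
  split_ifs <;> simp

theorem digit_equiv {N s : ℕ} (j : Fin N → Fin s) (u : Fin N) :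
    digit s (finFunctionFinEquiv j : Fin (s ^ N)) u = j u := by
  have h := finFunctionFinEquiv_symm_apply_val (finFunctionFinEquiv j) u
  rw [Equiv.symm_apply_apply] at h
  exact h.symm

theorem digit_ge {N s : ℕ} (x : Fin (s ^ N)) (hs : 0 < s) (u : ℕ) (hu : N ≤ u) :
    digit s x u = 0 := by
  unfold digit
  rw [Nat.div_eq_of_lt (lt_of_lt_of_le x.2 (Nat.pow_le_pow_right hs hu)), Nat.zero_mod]

theorem Aent_eq {F : Type*} [Field F] {N s : ℕ} (hs : 0 < s) (lam : ℕ → F) (a : Fin N) (b z : ℕ)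
    (i j : Fin N → Fin s) :
    Aent lam s s a b (finFunctionFinEquiv i : Fin (s ^ N)) (finFunctionFinEquiv j : Fin (s ^ N)) z
      = (Tm F a b * Lm lam a b ^ z : Matrix (Fin N → Fin s) (Fin N → Fin s) F) i j := by
  classical
  rw [TL_eq]
  simp only [Aent, Kmat, Matrix.of_apply, digit_equiv, Tphi]
  by_cases h : i = j
  · subst h; simp
  have h' : ((finFunctionFinEquiv i : Fin (s ^ N)) : ℕ) ≠ (finFunctionFinEquiv j : Fin (s ^ N)) := by
    intro h2
    exact h (finFunctionFinEquiv.injective (Fin.ext h2))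
  rw [if_neg h']
  have hiff : (∀ u, u ≠ (a : ℕ) → digit s (finFunctionFinEquiv i : Fin (s ^ N)) u =
      digit s (finFunctionFinEquiv j : Fin (s ^ N)) u) ↔ (∀ u, u ≠ a → i u = j u) := by
    constructor
    · intro h u hu
      have := h u (fun h => hu (Fin.ext h))
      rw [digit_equiv, digit_equiv] at this
      exact Fin.ext this
    · intro h u hu
      by_cases huN : u < N
      · have e := h ⟨u, huN⟩ (fun h => hu (congrArg Fin.val h))
        have e1 := digit_equiv i ⟨u, huN⟩
        have e2 := digit_equiv j ⟨u, huN⟩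
        simp only at e1 e2
        rw [e1, e2, e]
      · rw [digit_ge _ hs u (by omega), digit_ge _ hs u (by omega)]
  rw [hiff]
  by_cases h2 : ∀ u, u ≠ a → i u = j u
  · have hne : i a ≠ j a := by
      intro h3
      apply h
      funext u
      by_cases hu : u = a
      · rw [hu]; exact h3
      · exact h2 u hu
    rw [if_pos h2, if_neg hne]
    by_cases h4 : ((i a : Fin s) : ℕ) = b ∧ ((j a : Fin s) : ℕ) ≠ b
    · rw [if_pos ⟨h4.1, h4.2, h2⟩, if_pos h4]; ring
    · rw [if_neg (fun h5 => h4 ⟨h5.1, h5.2.1⟩), if_neg h4]; ring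
  · rw [if_neg h2, if_neg (fun h5 => h2 h5.2.2)]

theorem diag_N {F ι : Type*} [Field F] [Fintype ι] [DecidableEq ι] (f : ι → F) (S : Finset F)
    (hf : ∀ i, f i ∈ S) (μ : F) (hμ : μ ∉ S) :
    ∃ M, (Matrix.diagonal f - algebraMap F (Matrix ι ι F) μ) * M = 1 := by
  refine ⟨Matrix.diagonal fun i => (f i - μ)⁻¹, ?_⟩
  rw [Matrix.algebraMap_eq_diagonal, Matrix.diagonal_sub, Matrix.diagonal_mul_diagonal,
    ← Matrix.diagonal_one]
  congr 1
  funext i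
  have : f i - μ ≠ 0 := fun h => hμ (by rw [← sub_eq_zero.1 h]; exact hf i)
  simpa using mul_inv_cancel₀ this

theorem diag_S {F ι : Type*} [Field F] [Fintype ι] [DecidableEq ι] (f : ι → F) (S : Finset F)
    (hf : ∀ i, f i ∈ S) :
    Polynomial.aeval (Matrix.diagonal f) (∏ c ∈ S, (Polynomial.X - Polynomial.C c)) = 0 := by
  have h : (Matrix.diagonal f : Matrix ι ι F) = Matrix.diagonalAlgHom F f := rfl
  rw [h, Polynomial.aeval_algHom_apply]
  have : Polynomial.aeval f (∏ c ∈ S, (Polynomial.X - Polynomial.C c)) = 0 := by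
    funext i
    rw [Polynomial.aeval_pi_apply]
    simp only [map_prod, Pi.zero_apply]
    exact Finset.prod_eq_zero (hf i) (by simp)
  rw [this, map_zero]

theorem enum_lt (B : Finset ℕ) (s q : ℕ) (hs : 0 < s) (hB : B ⊆ Finset.range s) : enum B q < s := by
  unfold enum
  by_cases h : q < (B.sort (· ≤ ·)).length
  · rw [List.getD_eq_getElem _ _ h]
    have : (B.sort (· ≤ ·))[q] ∈ B := (Finset.mem_sort (· ≤ ·)).1 (List.getElem_mem h)
    simpa using hB this
  · rw [List.getD_eq_default _ _ (by omega)]; exact hs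

theorem sum_enum {M : Type*} [AddCommMonoid M] (B : Finset ℕ) (f : ℕ → M) :
    ∑ q ∈ Finset.range B.card, f (enum B q) = ∑ b ∈ B, f b := by
  conv_rhs => rw [← Finset.map_orderEmbOfFin_univ B rfl, Finset.sum_map]
  rw [Finset.sum_range]
  refine Finset.sum_congr rfl fun q _ => ?_
  congr 1
  have : (q : ℕ) < (B.sort (· ≤ ·)).length := by simp
  unfold enum
  rw [List.getD_eq_getElem _ _ this]
  simp [Finset.orderEmbOfFin_apply]

theorem sum_split {M : Type*} [AddCommMonoid M] (N s : ℕ) (f : ℕ → M) :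
    ∑ m ∈ Finset.range (N * s), f m = ∑ a : Fin N, ∑ b : Fin s, f (a * s + b) := by
  rw [Finset.sum_range, ← finProdFinEquiv.sum_comp, Fintype.sum_prod_type]
  refine Finset.sum_congr rfl fun a _ => Finset.sum_congr rfl fun b _ => ?_
  congr 1
  simp [finProdFinEquiv]; ring

theorem local_unit {F : Type*} [Field F] {N s : ℕ} (hs : 0 < s) (lam : ℕ → F)
    (hloc : LocalConstraints lam s s (s ^ N) N) (a : Fin N) (B : Finset ℕ)
    (hB : B ⊆ Finset.range s) :
    IsUnit (Matrix.of (fun (z q : Fin B.card) => Tm F a (enum B q) * Lm lam a (enum B q) ^ (z : ℕ)) :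
      Matrix (Fin B.card) (Fin B.card) (Matrix (Fin N → Fin s) (Fin N → Fin s) F)) := by
  classical
  rcases B.eq_empty_or_nonempty with rfl | hne
  · have : Subsingleton (Matrix (Fin (Finset.card (∅ : Finset ℕ))) (Fin (Finset.card (∅ : Finset ℕ)))
        (Matrix (Fin N → Fin s) (Fin N → Fin s) F)) := by
      rw [Finset.card_empty]; infer_instance
    exact isUnit_of_subsingleton _
  have hdet := hloc a a.2 B hB hne
  have hu : IsUnit (AmatB lam s s (s ^ N) a B.card B) :=
    (Matrix.isUnit_iff_isUnit_det _).2 hdet.isUnit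
  let e₁ : Fin B.card × (Fin N → Fin s) ≃ Fin (s ^ N * B.card) :=
    ((Equiv.prodComm _ _).trans (Equiv.prodCongr finFunctionFinEquiv (Equiv.refl _))).trans
      finProdFinEquiv
  let e₂ : Fin B.card × (Fin N → Fin s) ≃ Fin (s ^ N * B.card) :=
    ((Equiv.prodCongr (Equiv.refl _) finFunctionFinEquiv).trans finProdFinEquiv).trans
      (finCongr (Nat.mul_comm _ _))
  rw [← Matrix.isUnit_submatrix_equiv e₁ e₂] at hu
  have hu2 := hu.map (Matrix.compRingEquiv (Fin B.card) (Fin N → Fin s) F).symm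
  convert hu2 using 1
  ext z q i j
  have hv : 0 < B.card := hne.card_pos
  have hl : 0 < s ^ N := Nat.pow_pos hs
  have h1 : ((e₁ (z, i) : Fin _) : ℕ) = z + B.card * (finFunctionFinEquiv i : Fin (s ^ N)) := rfl
  have h2 : ((e₂ (q, j) : Fin _) : ℕ) = (finFunctionFinEquiv j : Fin (s ^ N)) + s ^ N * q := rfl
  have h3 : ((Matrix.compRingEquiv (Fin B.card) (Fin N → Fin s) F).symm
    ((AmatB lam s s (s ^ N) a B.card B).submatrix e₁ e₂)) z q i j =
      AmatB lam s s (s ^ N) a B.card B (e₁ (z, i)) (e₂ (q, j)) := rfl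
  rw [h3]
  simp only [AmatB, Matrix.of_apply, h1, h2]
  rw [Nat.add_mul_div_left _ _ hv, Nat.add_mul_div_left _ _ hl, Nat.add_mul_mod_self_left,
    Nat.add_mul_mod_self_left, Nat.div_eq_of_lt z.2, Nat.mod_eq_of_lt z.2,
    Nat.div_eq_of_lt (Fin.is_lt _), Nat.mod_eq_of_lt (Fin.is_lt _), zero_add, zero_add, Aent_eq hs]

theorem idx_inj {s a b c a' b' c' : ℕ} (hb : b < s) (hc : c < s) (hb' : b' < s) (hc' : c' < s)
    (h : a * s * s + b * s + c = a' * s * s + b' * s + c') : a = a' ∧ b = b' ∧ c = c' := by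
  have key : ∀ x y x' y' : ℕ, y < s → y' < s → x * s + y = x' * s + y' → x = x' ∧ y = y' := by
    intro x y x' y' hy hy' h
    have hs : 0 < s := by omega
    have h1 : (x * s + y) / s = x := by
      rw [mul_comm, Nat.mul_add_div hs, Nat.div_eq_of_lt hy, add_zero]
    have h2 : (x' * s + y') / s = x' := by
      rw [mul_comm, Nat.mul_add_div hs, Nat.div_eq_of_lt hy', add_zero]
    have h3 : x = x' := by rw [← h1, ← h2, h]
    subst h3
    exact ⟨rfl, by omega⟩
  have h1 := key (a * s + b) c (a' * s + b') c' hc hc' (by rw [add_mul, add_mul]; exact h)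
  have h2 := key a b a' b' hb hb' h1.1
  exact ⟨h2.1, h2.2, h1.2⟩

theorem idx_lt {s N a b c : ℕ} (ha : a < N) (hb : b < s) (hc : c < s) :
    a * s * s + b * s + c < N * s * s := by
  have h1 : a * s + b < N * s := by nlinarith
  nlinarith

theorem core {F : Type*} [Field F] {N s d r : ℕ} (hs : 0 < s) (lam : ℕ → F)
    (hdist : ∀ i < N * s * s, ∀ j < N * s * s, lam i = lam j → i = j)
    (hloc : LocalConstraints lam s s (s ^ N) N) (a : Fin N) (b : Fin s)
    (H : Finset ℕ) (hH : H ⊆ Finset.range (N * s)) (hab : (a : ℕ) * s + b ∉ H)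
    (hcard : H.card = d) (hr : r + d + 1 = N * s + s)
    (D : ℕ → (Fin N → Fin s) → F)
    (heq : ∀ i, ∀ z < r, ∑ a' : Fin N, ∑ b' : Fin s, ∑ j,
      (Tm F a' b' * Lm lam a' b' ^ z : Matrix (Fin N → Fin s) (Fin N → Fin s) F) i j
        * D (a' * s + b') j = 0)
    (hz : ∀ m ∈ H, ∀ j, j a = b → D m j = 0) :
    ∀ i, D (a * s + b) i = 0 := by
  classical
  let B : Fin N → Finset ℕ := fun a' => (Finset.range s).filter fun b' => (a' : ℕ) * s + b' ∉ H
  have hBsub : ∀ a', B a' ⊆ Finset.range s := fun a' => Finset.filter_subset _ _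
  have hBsumF : ∀ (a' : Fin N) (f : ℕ → F), ∑ x ∈ B a', f x =
      ∑ b' : Fin s, if (a' : ℕ) * s + b' ∉ H then f b' else 0 := by
    intro a' f
    rw [Finset.sum_filter, Finset.sum_range]
  have hBsum : ∀ (a' : Fin N) (f : ℕ → ℕ), ∑ x ∈ B a', f x =
      ∑ b' : Fin s, if (a' : ℕ) * s + b' ∉ H then f b' else 0 := by
    intro a' f
    rw [Finset.sum_filter, Finset.sum_range]
  let Ba : Finset (Fin s) := Finset.univ.filter fun b' => b' ≠ b ∧ (a : ℕ) * s + b' ∉ H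
  let v : Fin N ⊕ (Fin s ⊕ Fin s) → ℕ := Sum.elim (fun a' => (B a').card) (fun _ => 1)
  let T : Fin N ⊕ (Fin s ⊕ Fin s) → ℕ → Matrix (Fin N → Fin s) (Fin N → Fin s) F :=
    Sum.elim (fun a' q => Tm F a' (enum (B a') q)) (fun _ _ => 1)
  let L : Fin N ⊕ (Fin s ⊕ Fin s) → ℕ → Matrix (Fin N → Fin s) (Fin N → Fin s) F :=
    Sum.elim (fun a' q => Lm lam a' (enum (B a') q))
      (Sum.elim (fun j _ => Matrix.diagonal fun _ => lam (a * s * s + b * s + j))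
        (fun b' _ => Matrix.diagonal fun _ => lam (a * s * s + b' * s + b)))
  let S : Fin N ⊕ (Fin s ⊕ Fin s) → Finset F :=
    Sum.elim (fun a' => Finset.univ.image fun p : Fin s × Fin s => lam (a' * s * s + p.1 * s + p.2))
      (Sum.elim (fun j => {lam (a * s * s + b * s + j)})
        (fun b' => {lam (a * s * s + b' * s + b)}))
  let Y : Fin N ⊕ (Fin s ⊕ Fin s) → ℕ → Matrix (Fin N → Fin s) (Fin N → Fin s) F :=
    Sum.elim (fun a' q => Matrix.of fun j _ => if j a = b then D (a' * s + enum (B a') q) j else 0)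
      (Sum.elim (fun j0 _ => Matrix.of fun i _ => if i a = b then
          Tphi F s b b j0 * D (a * s + b) (Function.update i a j0) else 0)
        (fun b' _ => Matrix.of fun i _ => if i a = b then D (a * s + b') i else 0))
  let G : Finset (Fin N ⊕ (Fin s ⊕ Fin s)) :=
    (Finset.univ.erase a).disjSum (Finset.univ.disjSum Ba)
  -- commutation with scalars
  have hsc : ∀ (x : F) (M : Matrix (Fin N → Fin s) (Fin N → Fin s) F),
      Commute (Matrix.diagonal fun _ => x) M := by
    intro x M
    ext i j
    simp [mul_comm]
  have hdg : ∀ g q, ∃ f : (Fin N → Fin s) → F, L g q = Matrix.diagonal f ∧ ∀ i, f i ∈ S g := by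
    rintro (a' | j | b') q
    · refine ⟨_, rfl, fun i => ?_⟩
      exact Finset.mem_image.2 ⟨(⟨enum (B a') q, enum_lt _ _ _ hs (hBsub a')⟩, i a'),
        Finset.mem_univ _, rfl⟩
    · exact ⟨_, rfl, fun i => Finset.mem_singleton_self _⟩
    · exact ⟨_, rfl, fun i => Finset.mem_singleton_self _⟩
  have hvsum : ∑ g ∈ G, v g = r := by
    simp only [G, v, Finset.sum_disjSum, Sum.elim_inl, Sum.elim_inr, Finset.sum_const, Finset.card_disjSum,
      Finset.card_univ, Fintype.card_fin, smul_eq_mul, mul_one]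
    have h1 : ∑ a', (B a').card + d = N * s := by
      have : ∑ m ∈ Finset.range (N * s), (if m ∉ H then 1 else 0) = ∑ a', (B a').card := by
        rw [sum_split]
        refine Finset.sum_congr rfl fun a' _ => ?_
        rw [Finset.card_eq_sum_ones, hBsum]
      rw [← this, ← Finset.card_filter, ← hcard]
      have h2 := Finset.card_filter_add_card_filter_not (s := Finset.range (N * s)) (fun m => m ∈ H)
      have h3 : (Finset.range (N * s)).filter (fun m => m ∈ H) = H := by
        ext m; simp only [Finset.mem_filter]
        exact ⟨fun h => h.2, fun h => ⟨hH h, h⟩⟩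
      rw [h3, Finset.card_range] at h2
      omega
    have h2 : (B a).card = Ba.card + 1 := by
      rw [Finset.card_eq_sum_ones, hBsum, ← Finset.card_filter]
      have : (Finset.univ.filter fun b' : Fin s => (a : ℕ) * s + b' ∉ H) = insert b Ba := by
        ext x
        simp only [Finset.mem_filter, Finset.mem_univ, true_and, Finset.mem_insert, Ba]
        constructor
        · intro h
          by_cases hx : x = b
          · exact Or.inl hx
          · exact Or.inr ⟨hx, h⟩
        · rintro (rfl | h)
          · exact hab
          · exact h.2
      rw [this, Finset.card_insert_of_notMem (by simp [Ba])]
    have h3 := Finset.add_sum_erase Finset.univ (fun a' => (B a').card) (Finset.mem_univ a)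
    omega
  have hYall : ∀ g ∈ G, ∀ q < v g, Y g q = 0 := by
    refine multi_group v T L S G ?_ ?_ ?_ ?_ ?_ ?_ ?_ Y ?_
    · rintro (a' | j) _
      · exact local_unit hs lam hloc a' (B a') (hBsub a')
      · convert isUnit_one
        refine Matrix.ext fun (z : Fin 1) (q : Fin 1) => ?_
        have hz0 : z = 0 := Subsingleton.elim _ _
        have hq0 : q = 0 := Subsingleton.elim _ _
        subst hz0 hq0
        change (1 : Matrix (Fin N → Fin s) (Fin N → Fin s) F) * L (Sum.inr j) 0 ^ 0 =
          (1 : Matrix (Fin 1) (Fin 1) (Matrix (Fin N → Fin s) (Fin N → Fin s) F)) 0 0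
        simp
    · rintro (a' | j) _ (a'' | j') _ hne q q'
      · exact Kmat_commute _ _ (fun h => hne (by rw [h])) _ _
      · exact Commute.one_right _
      · exact Commute.one_left _
      · exact Commute.one_left _
    · rintro (a' | j) _ (a'' | j' | j') _ hne q q'
      · change Commute (Tm F _ _) (Lm _ _ _)
        rw [Lm_eq]
        exact Kmat_commute _ _ (fun h => hne (by rw [h])) _ _
      · exact (hsc _ _).symm
      · exact (hsc _ _).symm
      · exact Commute.one_left _
      · exact Commute.one_left _
      · exact Commute.one_left _
    · intro g _ h _ _ q q'
      obtain ⟨f, hf, _⟩ := hdg g q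
      obtain ⟨f', hf', _⟩ := hdg h q'
      rw [hf, hf']
      exact Matrix.commute_diagonal _ _
    · intro g _ q μ hμ
      obtain ⟨f, hf, hfS⟩ := hdg g q
      rw [hf]
      exact diag_N f _ hfS μ hμ
    · intro g _ q
      obtain ⟨f, hf, hfS⟩ := hdg g q
      rw [hf]
      exact diag_S f _ hfS
    · -- disjointness of the spectra
      have hi : ∀ (x y : Fin N) (p q p' q' : Fin s),
          lam (x * s * s + p * s + q) = lam (y * s * s + p' * s + q') → x = y ∧ p = p' ∧ q = q' := by
        intro x y p q p' q' h
        have h1 := hdist _ (idx_lt x.2 p.2 q.2) _ (idx_lt y.2 p'.2 q'.2) h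
        have h2 := idx_inj p.2 q.2 p'.2 q'.2 h1
        exact ⟨Fin.ext h2.1, Fin.ext h2.2.1, Fin.ext h2.2.2⟩
      rintro (a' | j | b') hg (a'' | j' | b'') hh hne x hx hx'
      all_goals
        simp only [S, Sum.elim_inl, Sum.elim_inr, Finset.mem_image, Finset.mem_univ, true_and,
          Finset.mem_singleton, Prod.exists, G, Finset.inl_mem_disjSum, Finset.inr_mem_disjSum,
          Finset.mem_erase, Ba, Finset.mem_filter, and_true] at hx hx' hg hh
      · obtain ⟨p, q, rfl⟩ := hx
        obtain ⟨p', q', h⟩ := hx'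
        exact hne (by rw [(hi _ _ _ _ _ _ h).1])
      · obtain ⟨p, q, rfl⟩ := hx
        exact hg (hi _ _ _ _ _ _ hx').1
      · obtain ⟨p, q, rfl⟩ := hx
        exact hg (hi _ _ _ _ _ _ hx').1
      · obtain ⟨p, q, rfl⟩ := hx'
        exact hh (hi _ _ _ _ _ _ hx).1
      · subst hx
        exact hne (by rw [(hi _ _ _ _ _ _ hx').2.2])
      · subst hx
        exact hh.1 (hi _ _ _ _ _ _ hx').2.1.symm
      · obtain ⟨p, q, rfl⟩ := hx'
        exact hh (hi _ _ _ _ _ _ hx).1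
      · subst hx
        exact hg.1 (hi _ _ _ _ _ _ hx').2.1
      · subst hx
        exact hne (by rw [(hi _ _ _ _ _ _ hx').2.1])
    · intro z hzr
      rw [hvsum] at hzr
      simp only [G, Finset.sum_disjSum]
      ext i k
      simp only [v, T, L, Y, Sum.elim_inl, Sum.elim_inr, Finset.sum_range_one, one_mul,
        Matrix.diagonal_pow, Matrix.add_apply, Matrix.sum_apply, Matrix.diagonal_mul,
        Matrix.of_apply, Matrix.zero_apply, Pi.pow_apply]
      have hgrp : ∀ a' ∈ Finset.univ.erase a, ∑ q ∈ Finset.range (B a').card,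
          ((Tm F a' (enum (B a') q) * Lm lam a' (enum (B a') q) ^ z) *
            (Matrix.of fun j _ => if j a = b then D (a' * s + enum (B a') q) j else 0) :
              Matrix (Fin N → Fin s) (Fin N → Fin s) F) i k =
          if i a = b then ∑ b' : Fin s, ∑ j,
            (Tm F a' b' * Lm lam a' b' ^ z : Matrix (Fin N → Fin s) (Fin N → Fin s) F) i j
              * D (a' * s + b') j else 0 := by
        intro a' ha'
        have hne : a ≠ a' := fun h => (Finset.mem_erase.1 ha').1 h.symm
        rw [sum_enum (B a') (fun x => ((Tm F a' x * Lm lam a' x ^ z) *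
            (Matrix.of fun j _ => if j a = b then D (a' * s + x) j else 0) :
              Matrix (Fin N → Fin s) (Fin N → Fin s) F) i k), hBsumF]
        simp only [TL_eq]
        simp only [Matrix.mul_apply, Matrix.of_apply, Kmat_row,
          Function.update_of_ne hne]
        by_cases hi : i a = b
        · simp only [hi, if_true]
          refine Finset.sum_congr rfl fun b' _ => ?_
          by_cases h : (a' : ℕ) * s + b' ∉ H
          · rw [if_pos h]
          · rw [if_neg h]
            symm
            refine Finset.sum_eq_zero fun c _ => ?_
            rw [hz _ (not_not.1 h), mul_zero]
            rw [Function.update_of_ne hne, hi]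
        · simp [hi]
      rw [Finset.sum_congr rfl hgrp]
      by_cases hi : i a = b
      · simp only [hi, if_true]
        have h0 := heq i z hzr
        rw [← Finset.add_sum_erase _ _ (Finset.mem_univ a)] at h0
        rw [← h0, add_comm]
        congr 1
        conv_rhs => rw [← Finset.add_sum_erase _ _ (Finset.mem_univ b)]
        simp only [TL_eq, Kmat_row, hi]
        congr 1
        · refine Finset.sum_congr rfl fun c _ => ?_
          ring
        · refine (Finset.sum_subset_zero_on_sdiff ?_ ?_ ?_)
          · intro x hx
            exact Finset.mem_erase.2 ⟨(Finset.mem_filter.1 hx).2.1, Finset.mem_univ _⟩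
          · intro x hx
            rw [Finset.mem_sdiff, Finset.mem_erase] at hx
            have hxH : (a : ℕ) * s + x ∈ H := by
              by_contra h
              exact hx.2 (Finset.mem_filter.2 ⟨Finset.mem_univ _, hx.1.1, h⟩)
            refine Finset.sum_eq_zero fun c _ => ?_
            by_cases hc : b = c
            · rw [hz _ hxH _ (by simp [hc]), mul_zero]
            · have : Tphi F s x b c = 0 := by
                simp only [Tphi]
                rw [if_neg hc, if_neg]
                rintro ⟨h1, _⟩
                exact hx.1.1 (Fin.ext h1.symm)
              rw [this, zero_mul, zero_mul]
          · intro x hx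
            have hxb := (Finset.mem_filter.1 hx).2.1
            symm
            rw [Finset.sum_eq_single b]
            · have : Function.update i a b = i := by rw [← hi, Function.update_eq_self]
              rw [this]
              simp [Tphi]
            · intro c _ hc
              have : Tphi F s x b c = 0 := by
                simp only [Tphi]
                rw [if_neg (Ne.symm hc), if_neg]
                rintro ⟨h1, _⟩
                exact hxb (Fin.ext h1.symm)
              rw [this, zero_mul, zero_mul]
            · simp
      · simp [hi]
  intro i
  have h := hYall (Sum.inr (Sum.inl (i a))) (by simp [G]) 0 (by simp [v])
  have h2 := congrFun (congrFun h (Function.update i a b)) i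
  simp only [Y, Sum.elim_inr, Sum.elim_inl, Matrix.of_apply, Function.update_self, if_true,
    Function.update_idem, Function.update_eq_self, Matrix.zero_apply, mul_eq_zero] at h2
  rcases h2 with h2 | h2
  · exfalso
    revert h2
    simp only [Tphi]
    split_ifs with h3 h4
    · simp
    · simp
    · exact fun _ => h4 ⟨trivial, fun h5 => h3 (Fin.ext h5.symm)⟩
  · exact h2

/-- optimal-access repair for the first construction: if two codewords
agree, for every helper node `j ∈ H` (`|H| = d`, `as+b ∉ H`), on all symbols `C_j(i)` with
`i_a = b`, then they agree on the whole node `as+b`; i.e. node `as+b` is determined by the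
`ℓ/s` accessed symbols of any `d` helpers. -/
theorem statement13 (F : Type*) [Field F] [Fintype F] (n k d s ℓ r : ℕ)
    (hk : 1 ≤ k) (hkn : k < n) (hd₁ : k + 1 ≤ d) (hd₂ : d ≤ n - 1)
    (hs : s = d - k + 1) (hdiv : s ∣ n) (hℓ : ℓ = s ^ (n / s)) (hr : r = n - k)
    (lam : ℕ → F)
    (hdist : ∀ i < n * s, ∀ j < n * s, lam i = lam j → i = j)
    (hloc : LocalConstraints lam s s ℓ (n / s))
    (a b : ℕ) (ha : a < n / s) (hb : b < s)
    (H : Finset ℕ) (hHsub : H ⊆ Finset.range n) (hHnotin : a * s + b ∉ H)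
    (hHcard : H.card = d)
    (C C' : ℕ → ℕ → F)
    (hC : InCode lam s s ℓ r n C) (hC' : InCode lam s s ℓ r n C')
    (hagree : ∀ j ∈ H, ∀ i < ℓ, digit s i a = b → C j i = C' j i) :
    ∀ i < ℓ, C (a * s + b) i = C' (a * s + b) i := by
  have hs0 : 0 < s := by omega
  obtain ⟨N, rfl⟩ := hdiv
  have hN : s * N / s = N := Nat.mul_div_cancel_left N hs0
  rw [hN] at ha hℓ hloc
  subst hℓ
  have hr0 : 0 < r := by omega
  rw [mul_comm s N] at *
  have hres := core (N := N) (s := s) (d := d) (r := r) hs0 lam hdist hloc ⟨a, ha⟩ ⟨b, hb⟩ H hHsub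
    hHnotin hHcard (by omega)
    (fun m j => C m (finFunctionFinEquiv j : Fin (s ^ N)) - C' m (finFunctionFinEquiv j : Fin (s ^ N)))
    ?_ ?_
  · intro i hi
    have := hres (finFunctionFinEquiv.symm ⟨i, hi⟩)
    simp only [Equiv.apply_symm_apply] at this
    exact sub_eq_zero.1 this
  · intro i z hzr
    have hρ : ((finFunctionFinEquiv i : Fin (s ^ N)) : ℕ) * r + z < s ^ N * r := by
      have := (finFunctionFinEquiv i : Fin (s ^ N)).2
      nlinarith
    have hdivr : (((finFunctionFinEquiv i : Fin (s ^ N)) : ℕ) * r + z) / r =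
        (finFunctionFinEquiv i : Fin (s ^ N)) := by
      rw [mul_comm, Nat.mul_add_div hr0, Nat.div_eq_of_lt hzr, add_zero]
    have hmodr : (((finFunctionFinEquiv i : Fin (s ^ N)) : ℕ) * r + z) % r = z := by
      rw [Nat.mul_add_mod_self_right, Nat.mod_eq_of_lt hzr]
    have conv : ∀ E : ℕ → ℕ → F, InCode lam s s (s ^ N) r (N * s) E →
        ∑ a' : Fin N, ∑ b' : Fin s, ∑ j,
          (Tm F a' b' * Lm lam a' b' ^ z : Matrix (Fin N → Fin s) (Fin N → Fin s) F) i j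
            * E (a' * s + b') (finFunctionFinEquiv j : Fin (s ^ N)) = 0 := by
      intro E hE
      have h := hE _ hρ
      rw [hdivr, hmodr, sum_split] at h
      rw [← h]
      refine Finset.sum_congr rfl fun a' _ => Finset.sum_congr rfl fun b' _ => ?_
      have e1 : ((a' : ℕ) * s + b') / s = a' := by
        rw [mul_comm, Nat.mul_add_div hs0, Nat.div_eq_of_lt b'.2, add_zero]
      have e2 : ((a' : ℕ) * s + b') % s = b' := by
        rw [Nat.mul_add_mod_self_right, Nat.mod_eq_of_lt b'.2]
      rw [e1, e2, Finset.sum_range, ← finFunctionFinEquiv.sum_comp]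
      refine Finset.sum_congr rfl fun j _ => ?_
      rw [Aent_eq hs0]
    have h1 := conv C hC
    have h2 := conv C' hC'
    simp only [mul_sub, Finset.sum_sub_distrib, h1, h2, sub_self]
  · intro m hm j hj
    refine sub_eq_zero.2 (hagree m hm _ (Fin.is_lt _) ?_)
    have := digit_equiv j ⟨a, ha⟩
    simp only at this
    rw [this, hj]
end

section
/- For every subset S ⊆ F_q with |S| ≥ s^2 + Σ_{t=1}^{s} C(s,t)·s·t·(t−1)/2, there exist s^2 pairwise distinct elements λ_0, …, λ_{s^2−1} ∈ S such that det(A_{0,B}) ≠ 0 for every nonempty subset B ⊆ {0,…,s−1} (the local constraints for group 0). -/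
open Matrix

lemma enum_mem (B : Finset ℕ) (m : ℕ) (hm : m < B.card) : enum B m ∈ B := by
  have h : m < (B.sort (· ≤ ·)).length := by simpa using hm
  unfold enum
  rw [List.getD_eq_getElem _ _ h]
  exact (Finset.mem_sort (· ≤ ·)).1 (List.getElem_mem h)

lemma enum_inj (B : Finset ℕ) (m m' : ℕ) (hm : m < B.card) (hm' : m' < B.card)
    (h : enum B m = enum B m') : m = m' := by
  have h1 : m < (B.sort (· ≤ ·)).length := by simpa using hm
  have h2 : m' < (B.sort (· ≤ ·)).length := by simpa using hm'
  unfold enum at h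
  rw [List.getD_eq_getElem _ _ h1, List.getD_eq_getElem _ _ h2] at h
  exact (List.Nodup.getElem_inj_iff (Finset.sort_nodup B (· ≤ ·))).1 h

lemma enum_surj (B : Finset ℕ) (b : ℕ) (hb : b ∈ B) : ∃ m < B.card, enum B m = b := by
  obtain ⟨m, h, e⟩ := List.getElem_of_mem ((Finset.mem_sort (· ≤ ·)).2 hb)
  refine ⟨m, by simpa using h, ?_⟩
  unfold enum
  rw [List.getD_eq_getElem _ _ h, e]

/-- Kernel coefficient. -/
def kc (F : Type*) [Field F] (b i j : ℕ) : F :=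
  if i = j then 1 else if i = b then -1 else 0

/-- Kernel matrix in which only the columns with index `< T` use `lam`; the others are
replaced by the coefficient of a distinguished power. -/
noncomputable def mixM {F : Type*} [Field F] (lam : ℕ → F) (s T : ℕ) (B : Finset ℕ) :
    Matrix (Fin s × Fin B.card) (Fin s × Fin B.card) F :=
  Matrix.of fun r c =>
    if enum B c.2 * s + c.1 < T then
      kc F (enum B c.2) r.1 c.1 * lam (enum B c.2 * s + c.1) ^ (r.2 : ℕ)
    else if r.2 = c.2 then kc F (enum B c.2) r.1 c.1 else 0

lemma digits_eq (s : ℕ) (hs : 2 ≤ s) (N : ℕ) : ∀ a b : ℕ, a < s ^ N → b < s ^ N →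
    (∀ u, a / s ^ u % s = b / s ^ u % s) → a = b := by
  induction N with
  | zero => intro a b ha hb _; simp at ha hb; omega
  | succ N ih =>
    intro a b ha hb h
    have h0 := h 0
    simp only [pow_zero, Nat.div_one] at h0
    have h1 : a / s = b / s := by
      apply ih
      · apply Nat.div_lt_of_lt_mul; rw [pow_succ] at ha; linarith
      · apply Nat.div_lt_of_lt_mul; rw [pow_succ] at hb; linarith
      · intro u
        have := h (u+1)
        rwa [pow_succ', ← Nat.div_div_eq_div_mul, ← Nat.div_div_eq_div_mul] at this
    rw [← Nat.div_add_mod a s, ← Nat.div_add_mod b s, h0, h1]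

lemma digits_iff (s : ℕ) (hs : 2 ≤ s) (q' q i j : ℕ) (hi : i < s) (hj : j < s) :
    (∀ u, u ≠ 0 → digit s (i + s * q') u = digit s (j + s * q) u) ↔ q' = q := by
  have key : ∀ q i u, i < s → digit s (i + s * q) (u+1) = q / s ^ u % s := by
    intro q i u hi
    unfold digit
    rw [pow_succ', ← Nat.div_div_eq_div_mul, Nat.add_mul_div_left _ _ (by omega),
      Nat.div_eq_of_lt hi, zero_add]
  constructor
  · intro h
    have hN : ∀ a, a ≤ q' + q → a < s ^ (q' + q) := fun a ha =>
      lt_of_le_of_lt ha (Nat.lt_pow_self (by omega))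
    apply digits_eq s hs (q' + q) _ _ (hN _ (by omega)) (hN _ (by omega))
    intro u
    have := h (u+1) (by omega)
    rwa [key _ _ _ hi, key _ _ _ hj] at this
  · rintro rfl u hu
    obtain ⟨u, rfl⟩ := Nat.exists_eq_succ_of_ne_zero hu
    rw [key _ _ _ hi, key _ _ _ hj]

lemma digit_zero (s : ℕ) (q i : ℕ) (hi : i < s) : digit s (i + s * q) 0 = i := by
  simp [digit, Nat.mod_eq_of_lt hi]

lemma Aent_eq_s16 {F : Type*} [Field F] (lam : ℕ → F) (s : ℕ) (hs : 2 ≤ s) (b q' q i j z : ℕ)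
    (hi : i < s) (hj : j < s) :
    Aent lam s s 0 b (i + s * q') (j + s * q) z =
      if q' = q then kc F b i j * lam (b * s + j) ^ z else 0 := by
  have hij : i + s * q' = j + s * q ↔ q' = q ∧ i = j := by
    constructor
    · intro h
      have h1 : i = j := by
        have := congrArg (· % s) h
        simpa [Nat.mod_eq_of_lt hi, Nat.mod_eq_of_lt hj] using this
      subst h1
      refine ⟨?_, rfl⟩
      exact Nat.eq_of_mul_eq_mul_left (by omega : 0 < s) (by omega)
    · rintro ⟨rfl, rfl⟩; rfl
  unfold Aent
  rw [digit_zero _ _ _ hi, digit_zero _ _ _ hj, digits_iff s hs _ _ _ _ hi hj]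
  simp only [hij]
  by_cases hq : q' = q
  · by_cases h1 : i = j
    · simp [kc, hq, h1]
    · by_cases h2 : i = b
      · have : j ≠ b := fun h => h1 (h2.trans h.symm)
        have h3 : ¬ b = j := fun h => this h.symm
        simp [kc, hq, h2, this, h3]
      · simp [kc, hq, h1, h2]
  · simp [hq]

lemma det_ne_of_kernel {F : Type*} [Field F] (lam : ℕ → F) (s p : ℕ) (hs : 2 ≤ s)
    (B : Finset ℕ) (hB : B ⊆ Finset.range s) (h : (mixM lam s (s ^ 2) B).det ≠ 0) :
    (AmatB lam s s (p * s) 0 B.card B).det ≠ 0 := by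
  intro h0
  obtain ⟨y, hy, hyA⟩ := Matrix.exists_vecMul_eq_zero_iff.2 h0
  apply hy
  have hx : ∀ q : Fin p, (fun r : Fin s × Fin B.card =>
      y (finProdFinEquiv (finProdFinEquiv (q, r.1), r.2))) = 0 := by
    intro q
    by_contra hne
    apply h
    apply Matrix.exists_vecMul_eq_zero_iff.1
    refine ⟨_, hne, ?_⟩
    funext ⟨j, m⟩
    have hl : (m : ℕ) * (p * s) + (j + s * q) < p * s * B.card := by
      have h1 : (j : ℕ) + s * q < p * s := by
        have := (finProdFinEquiv (q, j)).2
        simpa using this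
      have h2 : (m : ℕ) + 1 ≤ B.card := m.2
      have h3 := Nat.mul_le_mul_left (p * s) h2
      rw [Nat.mul_add, mul_one, mul_comm (p * s) (m : ℕ)] at h3
      omega
    have h1 : (j : ℕ) + s * q < p * s := by
      have := (finProdFinEquiv (q, j)).2
      simpa using this
    have hcol := congrFun hyA ⟨_, hl⟩
    simp only [Matrix.vecMul, dotProduct, Pi.zero_apply] at hcol ⊢
    rw [← finProdFinEquiv.sum_comp, Fintype.sum_prod_type, ← finProdFinEquiv.sum_comp,
      Fintype.sum_prod_type, Finset.sum_eq_single q] at hcol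
    · rw [Fintype.sum_prod_type, ← hcol]
      refine Finset.sum_congr rfl fun i _ => Finset.sum_congr rfl fun z _ => ?_
      congr 1
      have e1 : ((m : ℕ) * (p * s) + (j + s * q)) / (p * s) = m := by
        rw [mul_comm, Nat.mul_add_div (by omega), Nat.div_eq_of_lt h1, add_zero]
      have e2 : ((m : ℕ) * (p * s) + (j + s * q)) % (p * s) = j + s * q := by
        rw [mul_comm, Nat.mul_add_mod, Nat.mod_eq_of_lt h1]
      have hz : 0 < B.card := lt_of_le_of_lt (Nat.zero_le _) z.2
      have e3 : ((z : ℕ) + B.card * (i + s * q)) / B.card = i + s * q := by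
        rw [Nat.add_mul_div_left _ _ hz, Nat.div_eq_of_lt z.2, zero_add]
      have e4 : ((z : ℕ) + B.card * (i + s * q)) % B.card = z := by
        rw [Nat.add_mul_mod_self_left, Nat.mod_eq_of_lt z.2]
      have hb := Finset.mem_range.1 (hB (enum_mem B m m.2))
      have hT : enum B m * s + j < s ^ 2 := by nlinarith [j.2]
      simp only [mixM, AmatB, Matrix.of_apply, finProdFinEquiv_apply_val, e1, e2, e3, e4]
      rw [Aent_eq_s16 lam s hs _ _ _ _ _ _ i.2 j.2, if_pos hT, if_pos rfl]
    · intro q' _ hq'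
      refine Finset.sum_eq_zero fun i _ => Finset.sum_eq_zero fun z _ => ?_
      have e2 : ((m : ℕ) * (p * s) + (j + s * q)) % (p * s) = j + s * q := by
        rw [mul_comm, Nat.mul_add_mod, Nat.mod_eq_of_lt h1]
      have hz : 0 < B.card := lt_of_le_of_lt (Nat.zero_le _) z.2
      have e3 : ((z : ℕ) + B.card * (i + s * q')) / B.card = i + s * q' := by
        rw [Nat.add_mul_div_left _ _ hz, Nat.div_eq_of_lt z.2, zero_add]
      simp only [AmatB, Matrix.of_apply, finProdFinEquiv_apply_val, e2, e3]
      rw [Aent_eq_s16 lam s hs _ _ _ _ _ _ i.2 j.2, if_neg (fun h => hq' (Fin.ext h)), mul_zero]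
    · simp
  funext ρ
  obtain ⟨⟨a, z⟩, rfl⟩ := finProdFinEquiv.surjective ρ
  obtain ⟨⟨q, i⟩, rfl⟩ := finProdFinEquiv.surjective a
  exact congrFun (hx q) (i, z)

lemma base_ne {F : Type*} [Field F] (lam : ℕ → F) (s : ℕ) (B : Finset ℕ)
    (hB : B ⊆ Finset.range s) : (mixM lam s 0 B).det ≠ 0 := by
  intro h0
  obtain ⟨y, hy, hyA⟩ := Matrix.exists_vecMul_eq_zero_iff.2 h0
  apply hy
  have hc : ∀ (j : Fin s) (m : Fin B.card),
      ∑ i : Fin s, y (i, m) * kc F (enum B m) i j = 0 := by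
    intro j m
    have := congrFun hyA (j, m)
    simp only [Matrix.vecMul, dotProduct, Pi.zero_apply, mixM, Matrix.of_apply,
      Fintype.sum_prod_type, Nat.not_lt_zero, if_false] at this
    rw [← this]
    refine Finset.sum_congr rfl fun i _ => ?_
    simp
  have hb : ∀ (b : Fin s) (m : Fin B.card), (b : ℕ) = enum B m → y (b, m) = 0 := by
    intro b m hbm
    rw [← hc b m, Finset.sum_eq_single b]
    · simp [kc]
    · intro i _ hi
      have : ¬ (i : ℕ) = b := fun h => hi (Fin.ext h)
      simp [kc, ← hbm, this]
    · simp
  funext ⟨j, m⟩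
  show y (j, m) = 0
  rw [← hc j m, Finset.sum_eq_single j]
  · simp [kc]
  · intro i _ hi
    have h1 : ¬ (i : ℕ) = j := fun h => hi (Fin.ext h)
    by_cases h2 : (i : ℕ) = enum B m
    · rw [hb i m h2, zero_mul]
    · simp [kc, h1, h2]
  · simp

lemma roots_bound {F : Type*} [Field F] {ι : Type*} [Fintype ι] [DecidableEq ι] (v : ℕ)
    (M : Matrix ι ι F) (k : ι) (w : Fin v → ι → F) (m : Fin v)
    (h : (M.updateCol k (w m)).det ≠ 0) :
    ∃ R : Finset F, R.card ≤ v - 1 ∧ ∀ x ∉ R,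
      (M.updateCol k (∑ z : Fin v, x ^ (z : ℕ) • w z)).det ≠ 0 := by
  classical
  let P : Polynomial F := ∑ z : Fin v, Polynomial.monomial (z : ℕ) (M.updateCol k (w z)).det
  have hcoef : P.coeff m = (M.updateCol k (w m)).det := by
    simp only [P, Polynomial.finsetSum_coeff, Polynomial.coeff_monomial]
    rw [Finset.sum_eq_single m]
    · simp
    · intro b _ hb
      rw [if_neg (fun h => hb (Fin.ext h))]
    · simp
  have hP : P ≠ 0 := by
    intro h0; apply h; rw [← hcoef, h0]; simp
  have hdeg : P.natDegree ≤ v - 1 := by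
    apply Polynomial.natDegree_sum_le_of_forall_le
    intro z _
    exact (Polynomial.natDegree_monomial_le _).trans (by have := z.2; omega)
  refine ⟨P.roots.toFinset, (Multiset.toFinset_card_le _).trans
    ((Polynomial.card_roots' P).trans hdeg), ?_⟩
  intro x hx h0
  apply hx
  rw [Multiset.mem_toFinset, Polynomial.mem_roots hP, Polynomial.IsRoot.def, ← h0,
    ← Matrix.cramer_apply, map_sum, Finset.sum_apply]
  simp only [P, Polynomial.eval_finsetSum, Polynomial.eval_monomial]
  refine Finset.sum_congr rfl fun z _ => ?_
  rw [map_smul, Pi.smul_apply, Matrix.cramer_apply, smul_eq_mul, mul_comm]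

lemma step_one {F : Type*} [Field F] (lam : ℕ → F) (s T : ℕ) (B : Finset ℕ)
    (h : (mixM lam s T B).det ≠ 0) :
    ∃ R : Finset F, R.card ≤ B.card - 1 ∧ ∀ x ∉ R,
      (mixM (Function.update lam T x) s (T + 1) B).det ≠ 0 := by
  by_cases hT : ∃ c : Fin s × Fin B.card, enum B c.2 * s + c.1 = T
  · obtain ⟨⟨j, m⟩, hc⟩ := hT
    simp only at hc
    let w : Fin B.card → Fin s × Fin B.card → F := fun z r =>
      if r.2 = z then kc F (enum B m) r.1 j else 0
    have huniq : ∀ c : Fin s × Fin B.card, enum B c.2 * s + c.1 = T → c = (j, m) := by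
      rintro ⟨j', m'⟩ hc'
      simp only at hc'
      have hs : 0 < s := lt_of_le_of_lt (Nat.zero_le _) j.2
      have h1 : (j' : ℕ) = j := by
        have := congrArg (· % s) (hc'.trans hc.symm)
        simpa [Nat.mod_eq_of_lt j.2, Nat.mod_eq_of_lt j'.2, Nat.add_mod] using this
      have h2 : enum B m' = enum B m :=
        Nat.eq_of_mul_eq_mul_right hs (by omega)
      rw [Fin.ext h1, Fin.ext (enum_inj B _ _ m'.2 m.2 h2)]
    have e0 : (mixM lam s T B).updateCol (j, m) (w m) = mixM lam s T B := by
      ext r c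
      by_cases hcc : c = (j, m)
      · subst hcc
        simp [mixM, w, hc]
      · rw [Matrix.updateCol_ne hcc]
    obtain ⟨R, hR, hx⟩ := roots_bound B.card (mixM lam s T B) (j, m) w m (by rwa [e0])
    refine ⟨R, hR, fun x hxR => ?_⟩
    convert hx x hxR using 2
    ext r c
    by_cases hcc : c = (j, m)
    · subst hcc
      simp [mixM, w, hc]
      exact mul_comm _ _
    · rw [Matrix.updateCol_ne hcc]
      have hne : enum B c.2 * s + c.1 ≠ T := fun h => hcc (huniq c h)
      have : enum B c.2 * s + c.1 < T + 1 ↔ enum B c.2 * s + c.1 < T := by omega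
      simp only [mixM, Matrix.of_apply, this, Function.update_of_ne hne]
  · push Not at hT
    refine ⟨∅, by simp, fun x _ => ?_⟩
    convert h using 2
    ext r c
    have hne := hT c
    have : enum B c.2 * s + c.1 < T + 1 ↔ enum B c.2 * s + c.1 < T := by omega
    simp only [mixM, Matrix.of_apply, this, Function.update_of_ne hne]

lemma count_bound (s : ℕ) (hs : 2 ≤ s) :
    ∑ B ∈ (Finset.range s).powerset, (B.card - 1) ≤
      ∑ t ∈ Finset.Icc 1 s, s.choose t * (s * t * (t - 1) / 2) := by
  rw [Finset.sum_powerset_apply_card (fun t => t - 1), Finset.card_range,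
    Finset.range_eq_Ico, Finset.sum_eq_sum_Ico_succ_bot (by omega)]
  simp only [smul_eq_mul, zero_add, Nat.zero_sub, mul_zero]
  have : Finset.Ico 1 (s+1) = Finset.Icc 1 s := by ext; simp
  rw [this]
  refine Finset.sum_le_sum fun t ht => Nat.mul_le_mul_left _ ?_
  have ht1 := (Finset.mem_Icc.1 ht).1
  rw [Nat.le_div_iff_mul_le (by norm_num)]
  have : 2 ≤ s * t := by nlinarith
  nlinarith [Nat.zero_le (t - 1)]

/-- Appendix B of the paper: for every subset `S ⊆ F_q` with
`|S| ≥ s² + Σ_{t=1}^{s} C(s,t)·s·t·(t−1)/2`, there exist `s²` pairwise distinct elements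
`λ_0, …, λ_{s²−1} ∈ S` satisfying the local constraints for group `0`:
`det(A_{0,B}) ≠ 0` for every nonempty `B ⊆ [s]`. -/
theorem statement16 (F : Type*) [Field F] [Fintype F] (n k d s ℓ : ℕ)
    (hk : 1 ≤ k) (hkn : k < n) (hd₁ : k + 1 ≤ d) (hd₂ : d ≤ n - 1)
    (hs : s = d - k + 1) (hdiv : s ∣ n) (hℓ : ℓ = s ^ (n / s)) :
    ∀ S : Finset F,
      s ^ 2 + ∑ t ∈ Finset.Icc 1 s, s.choose t * (s * t * (t - 1) / 2) ≤ S.card →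
      ∃ lam : ℕ → F,
        (∀ i < s ^ 2, lam i ∈ S) ∧
        (∀ i < s ^ 2, ∀ j < s ^ 2, lam i = lam j → i = j) ∧
        (∀ B ⊆ Finset.range s, B.Nonempty → (AmatB lam s s ℓ 0 B.card B).det ≠ 0) := by
  intro S hS
  have hs2 : 2 ≤ s := by omega
  have hmain : ∀ T ≤ s ^ 2, ∃ lam : ℕ → F, (∀ i < T, lam i ∈ S) ∧
      (∀ i < T, ∀ j < T, lam i = lam j → i = j) ∧
      (∀ B ⊆ Finset.range s, (mixM lam s T B).det ≠ 0) := by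
    classical
    intro T
    induction T with
    | zero =>
      intro _
      exact ⟨fun _ => 0, by simp, by simp, fun B hB => base_ne _ _ _ hB⟩
    | succ T ih =>
      intro hT
      obtain ⟨lam, h1, h2, h3⟩ := ih (by omega)
      have hstep : ∀ B : Finset ℕ, ∃ R : Finset F, R.card ≤ B.card - 1 ∧
          (B ⊆ Finset.range s → ∀ x ∉ R,
            (mixM (Function.update lam T x) s (T + 1) B).det ≠ 0) := by
        intro B
        by_cases hB : B ⊆ Finset.range s
        · obtain ⟨R, hR, hx⟩ := step_one lam s T B (h3 B hB)
          exact ⟨R, hR, fun _ => hx⟩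
        · exact ⟨∅, by simp, fun h => absurd h hB⟩
      choose R hR hRx using hstep
      let bad : Finset F := (Finset.range T).image lam ∪
        (Finset.range s).powerset.biUnion R
      have hbad : bad.card < S.card := by
        calc bad.card ≤ ((Finset.range T).image lam).card +
              ((Finset.range s).powerset.biUnion R).card := Finset.card_union_le _ _
          _ ≤ T + ∑ B ∈ (Finset.range s).powerset, (B.card - 1) := by
              apply Nat.add_le_add
              · simpa using (Finset.card_image_le (s := Finset.range T) (f := lam))
              · exact Finset.card_biUnion_le.trans (Finset.sum_le_sum fun B _ => hR B)
          _ < S.card := by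
              have := count_bound s hs2
              omega
      obtain ⟨x, hxS, hxb⟩ := Finset.exists_mem_notMem_of_card_lt_card hbad
      have hxl : ∀ i < T, lam i ≠ x := fun i hi h => hxb (Finset.mem_union_left _
        (Finset.mem_image.2 ⟨i, Finset.mem_range.2 hi, h⟩))
      refine ⟨Function.update lam T x, ?_, ?_, ?_⟩
      · intro i hi
        by_cases hiT : i = T
        · subst hiT; simpa using hxS
        · rw [Function.update_of_ne hiT]; exact h1 i (by omega)
      · intro i hi j hj hij
        by_cases hiT : i = T
        · by_cases hjT : j = T
          · omega
          · subst hiT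
            rw [Function.update_self, Function.update_of_ne hjT] at hij
            exact absurd hij.symm (hxl j (by omega))
        · by_cases hjT : j = T
          · subst hjT
            rw [Function.update_self, Function.update_of_ne hiT] at hij
            exact absurd hij (hxl i (by omega))
          · rw [Function.update_of_ne hiT, Function.update_of_ne hjT] at hij
            exact h2 i (by omega) j (by omega) hij
      · intro B hB
        exact hRx B hB x fun h => hxb (Finset.mem_union_right _
          (Finset.mem_biUnion.2 ⟨B, Finset.mem_powerset.2 hB, h⟩))
  obtain ⟨lam, h1, h2, h3⟩ := hmain (s ^ 2) le_rfl
  refine ⟨lam, h1, h2, fun B hB _ => ?_⟩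
  have hns : 0 < n / s := Nat.div_pos (Nat.le_of_dvd (by omega) hdiv) (by omega)
  obtain ⟨e, he⟩ : ∃ e, n / s = e + 1 := ⟨n / s - 1, by omega⟩
  rw [he, pow_succ] at hℓ
  subst hℓ
  exact det_ne_of_kernel lam s (s ^ e) hs2 B hB (h3 B hB)
end
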